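/- Let X and Y be pure simplicial complexes with dim X ≥ 0 and dim Y ≥ 0, and let Y₀ be a nonempty subset of V(Y). Assume that sd X is star decomposable in vertices, that the pair (sd Y, Y₀) is star decomposable in vertices, and that st(Y₀, sd Y) has trivial reduced homology. Let ≺ be a total order on V(X) ⊔ V(Y) such that: (i) the restriction of ≺ to V(X) induces a star decomposition of (sd X, V(X)) in vertices; (ii) the restriction of ≺ to V(Y) induces a star decomposition of (sd Y, Y₀) in vertices; (iii) Y₀ = (V(X) ⊔ V(Y))_{≻x̂}, where x̂ is the ≺-largest element of V(X). Then ≺ induces a star decomposition of (sd(X * Y), Y₀) in vertices. -/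

import Mathlib

/-! Common definitions: finite abstract simplicial complexes, links, stars,
barycentric subdivision, joins, collapsibility, shellability, vertex
decomposability, star decomposability (also "in vertices"), and simplicial
homology (reduced, over ℤ and ℤ₂). -/

namespace Paper

open Finset

variable {V : Type*} [DecidableEq V]

/-- `K` is a (finite, abstract) simplicial complex: downward closed family of finsets. -/
def IsCplx (K : Finset (Finset V)) : Prop :=
  ∀ σ ∈ K, ∀ τ ⊆ σ, τ ∈ K

/-- Vertex set of a complex. -/
def verts (K : Finset (Finset V)) : Finset V := K.sup id

/-- Dimension of a complex (as an integer; `-1` for `∅` and `{∅}`). -/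
def dim (K : Finset (Finset V)) : ℤ := ((K.sup Finset.card : ℕ) : ℤ) - 1

/-- The facets (inclusion-maximal faces) of `K`. -/
def facets (K : Finset (Finset V)) : Finset (Finset V) :=
  K.filter fun σ => ∀ τ ∈ K, σ ⊆ τ → σ = τ

/-- `K` is pure `d`-dimensional: it is nonempty, every face has dimension at most `d`
and every face is contained in a face of dimension exactly `d`. -/
def PureDim (K : Finset (Finset V)) (d : ℤ) : Prop :=
  K.Nonempty ∧ (∀ σ ∈ K, (σ.card : ℤ) ≤ d + 1) ∧
    ∀ σ ∈ K, ∃ τ ∈ K, σ ⊆ τ ∧ (τ.card : ℤ) = d + 1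

/-- Link of a face. -/
def lk (σ : Finset V) (K : Finset (Finset V)) : Finset (Finset V) :=
  (K.filter fun τ => σ ⊆ τ).image fun τ => τ \ σ

/-- Closed star of a face. -/
def star (σ : Finset V) (K : Finset (Finset V)) : Finset (Finset V) :=
  K.filter fun τ => τ ∪ σ ∈ K

/-- Union of the closed stars of a set of vertices. -/
def starSet (S : Finset V) (K : Finset (Finset V)) : Finset (Finset V) :=
  K.filter fun τ => ∃ v ∈ S, τ ∪ {v} ∈ K

/-- Subcomplex induced on a vertex set `S`. -/
def induced (S : Finset V) (K : Finset (Finset V)) : Finset (Finset V) :=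
  K.filter fun σ => σ ⊆ S

/-- Deletion of a vertex:  `K - v`. -/
def deleteV (v : V) (K : Finset (Finset V)) : Finset (Finset V) :=
  K.filter fun σ => v ∉ σ

/-- The full simplex on vertex set `σ`. -/
def simplexCplx (σ : Finset V) : Finset (Finset V) := σ.powerset

/-- The boundary `∂σ` of the simplex on `σ`: all proper subsets of `σ`. -/
def bdSimplex (σ : Finset V) : Finset (Finset V) := σ.powerset.erase σ

/-- Barycentric subdivision: vertices are the nonempty faces of `K`, faces are
chains of nonempty faces of `K`. -/
def sd (K : Finset (Finset V)) : Finset (Finset (Finset V)) :=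
  if K = ∅ then ∅ else
    K.powerset.filter fun c => (∅ ∉ c) ∧ ∀ σ ∈ c, ∀ τ ∈ c, σ ⊆ τ ∨ τ ⊆ σ

/-- Join of two simplicial complexes (on the disjoint union of vertex types). -/
def join {α β : Type*} [DecidableEq α] [DecidableEq β]
    (X : Finset (Finset α)) (Y : Finset (Finset β)) : Finset (Finset (α ⊕ β)) :=
  (X ×ˢ Y).image fun p => p.1.image Sum.inl ∪ p.2.image Sum.inr

/-- `K'` arises from `K` by an elementary collapse: remove a free face `σ`
together with the unique face `τ` properly containing it. -/
def ElemCollapse (K K' : Finset (Finset V)) : Prop :=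
  ∃ σ ∈ K, ∃ τ ∈ K, σ ⊂ τ ∧ (∀ ρ ∈ K, σ ⊂ ρ → ρ = τ) ∧ K' = (K.erase σ).erase τ

/-- `K` collapses to `K'`. -/
def CollapsesTo (K K' : Finset (Finset V)) : Prop :=
  Relation.ReflTransGen ElemCollapse K K'

/-- `K` is collapsible: it collapses to a single vertex. -/
def Collapsible (K : Finset (Finset V)) : Prop :=
  ∃ w : V, CollapsesTo K ({∅, {w}} : Finset (Finset V))

/-- The removal-collapsibility condition: `K` is empty, or becomes collapsible
after removal of a set of facets. -/
def RC (K : Finset (Finset V)) : Prop :=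
  K = ∅ ∨ ∃ F ⊆ facets K, Collapsible (K \ F)

/-- The hereditary removal-collapsibility condition: the link of every face
(including the empty face, whose link is `K` itself) satisfies (RC). -/
def HRC (K : Finset (Finset V)) : Prop :=
  ∀ σ ∈ K, RC (lk σ K)

/-- `K` is shellable: there is a total order of its facets such that each facet
meets the union of the previous ones in a pure complex of codimension one. -/
def Shellable (K : Finset (Finset V)) : Prop :=
  ∃ L : List (Finset V), L.Nodup ∧ L.toFinset = facets K ∧
    ∀ i : ℕ, (hi : i < L.length) → 1 ≤ i →
      PureDim ((L.get ⟨i, hi⟩).powerset ∩ ((L.take i).map Finset.powerset).foldr (· ∪ ·) ∅)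
        (((L.get ⟨i, hi⟩).card : ℤ) - 2)

/-- Vertex decomposability (Provan–Billera) of a pure complex. -/
inductive VD : Finset (Finset V) → Prop
  | simplex (σ : Finset V) : VD σ.powerset
  | shed (K : Finset (Finset V)) (v : V) (hv : {v} ∈ K)
      (hdel : PureDim (deleteV v K) (dim K)) (hVDdel : VD (deleteV v K))
      (hlk : PureDim (lk {v} K) (dim K - 1)) (hVDlk : VD (lk {v} K)) : VD K

/-- `L` is a shedding order of `K` (a total order on `V(K)`, given as a
duplicate-free list, witnessing vertex decomposability; once a simplex is
reached, an arbitrary order of its vertices qualifies). -/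
inductive SheddingOrder : List V → Finset (Finset V) → Prop
  | simplex (σ : Finset V) (L : List V) (hnd : L.Nodup) (hfin : L.toFinset = σ) :
      SheddingOrder L σ.powerset
  | cons (v : V) (L : List V) (K : Finset (Finset V)) (hv : {v} ∈ K) (hvL : v ∉ L)
      (hcov : insert v L.toFinset = verts K)
      (hdel : PureDim (deleteV v K) (dim K))
      (hrest : SheddingOrder L (deleteV v K))
      (hlk : PureDim (lk {v} K) (dim K - 1)) (hVDlk : VD (lk {v} K)) :
      SheddingOrder (v :: L) K

/-- `W` induces a star partition of `X`: the stars of the vertices of `W`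
cover `X` and no two distinct vertices of `W` lie in a common face. -/
def StarPartition (W : Finset V) (X : Finset (Finset V)) : Prop :=
  (∀ σ ∈ X, ∃ w ∈ W, σ ∪ {w} ∈ X) ∧
    ∀ w₁ ∈ W, ∀ w₂ ∈ W, w₁ ≠ w₂ → ¬∃ σ ∈ X, w₁ ∈ σ ∧ w₂ ∈ σ

/-- The overlap `O_X(x, W') = lk(x,X) ∩ st(W',X)`. -/
def overlap (X : Finset (Finset V)) (x : V) (W' : Finset V) : Finset (Finset V) :=
  lk {x} X ∩ starSet W' X

/-- Star decomposability of the pair `(X, X₀)`.  The total order on the set `W`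
inducing the star partition is encoded as a duplicate-free list `L` (earlier in
the list = smaller in the order). -/
inductive StarDec : Finset (Finset V) → Finset V → Prop
  | base : StarDec ({∅} : Finset (Finset V)) (∅ : Finset V)
  | step (X : Finset (Finset V)) (X₀ : Finset V) (k : ℤ) (hk : 0 ≤ k) (hpure : PureDim X k)
      (L : List V) (hne : L ≠ []) (hnd : L.Nodup) (hsub : L.toFinset ⊆ verts X)
      (hsp : StarPartition L.toFinset X)
      (horder : ∃ i < L.length, X₀ = (L.drop i).toFinset)
      (U : ℕ → Finset V)
      (hUne : ∀ i, i + 1 < L.length → (U i).Nonempty)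
      (hUsub : ∀ i, (hi : i + 1 < L.length) →
        U i ⊆ verts (lk {L.get ⟨i, Nat.lt_of_succ_lt hi⟩} X))
      (hUst : ∀ i, (hi : i + 1 < L.length) →
        starSet (U i) (lk {L.get ⟨i, Nat.lt_of_succ_lt hi⟩} X) =
          overlap X (L.get ⟨i, Nat.lt_of_succ_lt hi⟩) ((L.drop (i + 1)).toFinset))
      (hlink : ∀ i, (hi : i + 1 < L.length) →
        StarDec (lk {L.get ⟨i, Nat.lt_of_succ_lt hi⟩} X) (U i))
      (Ulast : Finset V)
      (hlast : StarDec (lk {L.getLast hne} X) Ulast) :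
      StarDec X X₀

/-- The order encoded by the list `L` induces a star decomposition of `(X, X₀)`. -/
def InducesStarDecomp (L : List V) (X : Finset (Finset V)) (X₀ : Finset V) : Prop :=
  (L = [] ∧ X = ({∅} : Finset (Finset V)) ∧ X₀ = ∅) ∨
  ∃ hne : L ≠ [], L.Nodup ∧ StarPartition L.toFinset X ∧
    (∃ i < L.length, X₀ = (L.drop i).toFinset) ∧
    (∀ i, (hi : i + 1 < L.length) →
      ∃ U : Finset V, U.Nonempty ∧ U ⊆ verts (lk {L.get ⟨i, Nat.lt_of_succ_lt hi⟩} X) ∧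
        starSet U (lk {L.get ⟨i, Nat.lt_of_succ_lt hi⟩} X) =
          overlap X (L.get ⟨i, Nat.lt_of_succ_lt hi⟩) ((L.drop (i + 1)).toFinset) ∧
        StarDec (lk {L.get ⟨i, Nat.lt_of_succ_lt hi⟩} X) U) ∧
    (∃ U : Finset V, StarDec (lk {L.getLast hne} X) U)

/-- Star decomposability *in vertices* of the pair `(sd Y, Y₀)`; the data is the
underlying complex `Y` together with `Y₀ ⊆ V(Y)`.  The total order on `V(Y)` is
encoded as a duplicate-free list `L`. -/
inductive StarDecV : Finset (Finset V) → Finset V → Prop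
  | base : StarDecV ({∅} : Finset (Finset V)) (∅ : Finset V)
  | step (Y : Finset (Finset V)) (Y₀ : Finset V) (k : ℤ) (hk : 0 ≤ k) (hpure : PureDim Y k)
      (L : List V) (hne : L ≠ []) (hnd : L.Nodup) (hV : L.toFinset = verts Y)
      (horder : ∃ i < L.length, Y₀ = (L.drop i).toFinset)
      (hlink : ∀ i, (hi : i + 1 < L.length) →
        StarDecV (lk {L.get ⟨i, Nat.lt_of_succ_lt hi⟩} Y)
          (verts (lk {L.get ⟨i, Nat.lt_of_succ_lt hi⟩} Y) ∩ (L.drop (i + 1)).toFinset))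
      (hlast : StarDecV (lk {L.getLast hne} Y) (verts (lk {L.getLast hne} Y))) :
      StarDecV Y Y₀

/-- The order encoded by the list `L` induces a star decomposition of
`(sd Y, Y₀)` in vertices. -/
def InducesStarDecompV (L : List V) (Y : Finset (Finset V)) (Y₀ : Finset V) : Prop :=
  (L = [] ∧ Y = ({∅} : Finset (Finset V)) ∧ Y₀ = ∅) ∨
  ∃ hne : L ≠ [], L.Nodup ∧ L.toFinset = verts Y ∧
    (∃ i < L.length, Y₀ = (L.drop i).toFinset) ∧
    (∀ i, (hi : i + 1 < L.length) →
      StarDecV (lk {L.get ⟨i, Nat.lt_of_succ_lt hi⟩} Y)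
        (verts (lk {L.get ⟨i, Nat.lt_of_succ_lt hi⟩} Y) ∩ (L.drop (i + 1)).toFinset)) ∧
    StarDecV (lk {L.getLast hne} Y) (verts (lk {L.getLast hne} Y))

/-- Simplicial isomorphism between two complexes. -/
def SimpIso {α β : Type*} [DecidableEq α] [DecidableEq β]
    (K : Finset (Finset α)) (L : Finset (Finset β)) : Prop :=
  ∃ f : α → β, Set.InjOn f ↑(verts K) ∧ K.image (fun σ => σ.image f) = L

/-- Simplicial isomorphism of pairs (complex, subcomplex). -/
def SimpIsoPair {α β : Type*} [DecidableEq α] [DecidableEq β]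
    (K K₁ : Finset (Finset α)) (L L₁ : Finset (Finset β)) : Prop :=
  ∃ f : α → β, Set.InjOn f ↑(verts K) ∧ K.image (fun σ => σ.image f) = L ∧
    K₁.image (fun σ => σ.image f) = L₁

/-! Reduced simplicial homology (the empty face is included, so the chain
complex below, graded by cardinality of faces, computes *reduced* homology). -/

/-- Faces of `K` of cardinality `n`. -/
def kfaces (K : Finset (Finset V)) (n : ℕ) : Finset (Finset V) :=
  K.filter fun σ => σ.card = n

/-- The mod 2 boundary operator, from chains on faces of cardinality `n+1`
to chains on faces of cardinality `n`. -/
noncomputable def bdry2 (K : Finset (Finset V)) (n : ℕ) :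
    (↥(kfaces K (n + 1)) → ZMod 2) →ₗ[ZMod 2] (↥(kfaces K n) → ZMod 2) :=
  Matrix.mulVecLin (Matrix.of fun (τ : ↥(kfaces K n)) (σ : ↥(kfaces K (n + 1))) =>
    if (τ : Finset V) ⊆ (σ : Finset V) then (1 : ZMod 2) else 0)

/-- The reduced Betti number `β̃ᵢ(K; ℤ₂)`. -/
noncomputable def betti2 (K : Finset (Finset V)) (i : ℕ) : ℕ :=
  Module.finrank (ZMod 2) (LinearMap.ker (bdry2 K i)) -
    Module.finrank (ZMod 2) (LinearMap.range (bdry2 K (i + 1)))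

/-- Signed incidence coefficient (with respect to an arbitrary, but fixed,
linear order on the vertices; reduced homology does not depend on the choice). -/
noncomputable def coeffInt (σ τ : Finset V) : ℤ :=
  letI : LinearOrder V := IsWellOrder.linearOrder WellOrderingRel
  (σ \ τ).sum fun v => (-1 : ℤ) ^ ((σ.filter fun u => u < v).card)

/-- The integral boundary operator, from chains on faces of cardinality `n+1`
to chains on faces of cardinality `n`. -/
noncomputable def bdryZ (K : Finset (Finset V)) (n : ℕ) :
    (↥(kfaces K (n + 1)) → ℤ) →ₗ[ℤ] (↥(kfaces K n) → ℤ) :=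
  Matrix.mulVecLin (Matrix.of fun (τ : ↥(kfaces K n)) (σ : ↥(kfaces K (n + 1))) =>
    if (τ : Finset V) ⊆ (σ : Finset V) then coeffInt (σ : Finset V) (τ : Finset V) else 0)

/-- `K` has trivial reduced (integral) homology: `H̃ₙ(K; ℤ) = 0` for all
`n ≥ -1`. -/
def TrivialRedHomology (K : Finset (Finset V)) : Prop :=
  K.Nonempty ∧ LinearMap.range (bdryZ K 0) = ⊤ ∧
    ∀ n : ℕ, LinearMap.ker (bdryZ K n) = LinearMap.range (bdryZ K (n + 1))

/-- Reduced Euler characteristic. -/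
def redEuler (K : Finset (Finset V)) : ℤ :=
  (∑ σ ∈ K.filter fun σ => σ ≠ ∅, (-1 : ℤ) ^ (σ.card - 1)) - 1


/-!
The link of a vertex of `X * Y` is the join of one factor with a link in the other factor, so a
total order on `V(X) ⊔ V(Y)` can be tested vertex by vertex, by induction on the number of vertices.
At the last vertex `x̂` of `X` the required pair is `(sd (lk x̂ X * Y), Y₀)`, in which no vertex of
`lk x̂ X` is chosen. The same happens at each non-last `y ≻ x̂`, where the pair is
`(sd (X * lk y Y), V(lk y Y)_{≻y})`. Such pairs are the delicate case: they need `χ̃(Y[Y₀]) = 0`,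
where `Y[Y₀]` is the subcomplex induced on `Y₀`.

This condition passes to links: ordering `Y₀` as `y₁ ≺ ⋯ ≺ yₙ` and classifying the faces of `Y[Y₀]`
by their smallest vertex gives `χ̃(Y[Y₀]) = -∑ i < n, χ̃((lk yᵢ Y)[V(lk yᵢ Y)_{≻yᵢ}])`. Applied
inductively, this formula shows that the sign of `χ̃(Y[Y₀])` depends only on `dim Y` for every star
decomposable pair. Hence the summands have a common sign, and all of them vanish if the sum does.

Homology enters only through `χ̃`: the complex `st(Y₀, sd Y)` is the order complex of the faces of
`Y` that meet `Y₀`, and it has the same reduced Euler characteristic as `Y[Y₀]`.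
-/

section Basics

variable {K : Finset (Finset V)} {d e : ℤ} {v w : V} {σ τ : Finset V}

theorem mem_verts : v ∈ verts K ↔ ∃ σ ∈ K, v ∈ σ := by
  simp [verts, Finset.mem_sup]

theorem subset_verts (hσ : σ ∈ K) : σ ⊆ verts K :=
  fun _ hv => mem_verts.2 ⟨σ, hσ, hv⟩

theorem verts_singleton_empty : verts ({∅} : Finset (Finset V)) = ∅ := by
  simp [verts]

theorem eq_singleton_empty (hK : K.Nonempty) (hverts : verts K = ∅) : K = {∅} :=
  hK.subset_singleton_iff.1 fun _ hσ =>
    mem_singleton.2 <| subset_empty.1 <| hverts ▸ subset_verts hσ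

theorem mem_lk : τ ∈ lk {w} K ↔ w ∉ τ ∧ insert w τ ∈ K := by
  simp only [lk, mem_image, mem_filter, singleton_subset_iff, sdiff_singleton_eq_erase]
  constructor
  · rintro ⟨σ, ⟨hσ, hw⟩, rfl⟩
    exact ⟨notMem_erase w σ, by rwa [insert_erase hw]⟩
  · rintro ⟨hw, hτ⟩
    exact ⟨insert w τ, ⟨hτ, mem_insert_self w τ⟩, erase_insert hw⟩

theorem mem_verts_lk (hv : v ∈ verts (lk {w} K)) : v ∈ verts K ∧ v ≠ w := by
  obtain ⟨τ, hτ, hvτ⟩ := mem_verts.1 hv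
  obtain ⟨hw, hins⟩ := mem_lk.1 hτ
  exact ⟨mem_verts.2 ⟨_, hins, mem_insert_of_mem hvτ⟩, by rintro rfl; exact hw hvτ⟩

theorem verts_lk_subset : verts (lk {w} K) ⊆ verts K :=
  fun _ hv => (mem_verts_lk hv).1

theorem verts_lk_ssubset (hw : w ∈ verts K) : verts (lk {w} K) ⊂ verts K :=
  (ssubset_iff_of_subset verts_lk_subset).2 ⟨w, hw, fun h => (mem_verts_lk h).2 rfl⟩

omit [DecidableEq V] in
theorem IsCplx.empty_mem (hK : IsCplx K) (hne : K.Nonempty) : ∅ ∈ K :=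
  let ⟨σ, hσ⟩ := hne
  hK σ hσ ∅ (empty_subset σ)

theorem IsCplx.singleton_mem (hK : IsCplx K) (hv : v ∈ verts K) : {v} ∈ K :=
  let ⟨σ, hσ, hvσ⟩ := mem_verts.1 hv
  hK σ hσ {v} (singleton_subset_iff.2 hvσ)

theorem IsCplx.lk (hK : IsCplx K) : IsCplx (lk {w} K) := by
  intro τ hτ ρ hρ
  rw [mem_lk] at hτ ⊢
  exact ⟨fun hw => hτ.1 (hρ hw), hK _ hτ.2 _ (insert_subset_insert w hρ)⟩

theorem IsCplx.empty_mem_lk (hK : IsCplx K) (hw : w ∈ verts K) : ∅ ∈ Paper.lk {w} K :=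
  mem_lk.2 ⟨notMem_empty w, hK.singleton_mem hw⟩

omit [DecidableEq V] in
theorem PureDim.singleton_empty : PureDim ({∅} : Finset (Finset V)) (-1) := by
  simp [PureDim]

omit [DecidableEq V] in
theorem PureDim.unique (hd : PureDim K d) (he : PureDim K e) : d = e := by
  obtain ⟨σ, hσ⟩ := hd.1
  obtain ⟨τ, hτ, -, hτd⟩ := hd.2.2 σ hσ
  obtain ⟨ρ, hρ, -, hρe⟩ := he.2.2 σ hσ
  have := he.2.1 τ hτ
  have := hd.2.1 ρ hρ
  omega

theorem PureDim.nonneg (hd : PureDim K d) (hverts : (verts K).Nonempty) : 0 ≤ d := by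
  obtain ⟨v, hv⟩ := hverts
  obtain ⟨σ, hσ, hvσ⟩ := mem_verts.1 hv
  have := hd.2.1 σ hσ
  have := card_pos.2 ⟨v, hvσ⟩
  omega

theorem PureDim.lk (hd : PureDim K d) (hw : w ∈ verts K) : PureDim (lk {w} K) (d - 1) := by
  have card_erase {σ : Finset V} (hσ : w ∈ σ) : ((σ.erase w).card : ℤ) = σ.card - 1 := by
    rw [cast_card_erase_of_mem hσ]
  have erase_mem {σ : Finset V} (hσ : σ ∈ K) (hwσ : w ∈ σ) : σ.erase w ∈ Paper.lk {w} K :=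
    mem_lk.2 ⟨notMem_erase w σ, by rwa [insert_erase hwσ]⟩
  obtain ⟨σ, hσ, hwσ⟩ := mem_verts.1 hw
  refine ⟨⟨_, erase_mem hσ hwσ⟩, fun τ hτ => ?_, fun τ hτ => ?_⟩
  all_goals obtain ⟨hwτ, hins⟩ := mem_lk.1 hτ
  · have := hd.2.1 _ hins
    rw [card_insert_of_notMem hwτ] at this
    push_cast at this
    linarith
  · obtain ⟨ρ, hρ, hsub, hcard⟩ := hd.2.2 _ hins
    have hwρ := hsub (mem_insert_self w τ)
    refine ⟨ρ.erase w, erase_mem hρ hwρ, subset_erase.2 ⟨(subset_insert w τ).trans hsub, hwτ⟩, ?_⟩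
    rw [card_erase hwρ, hcard]
    ring

end Basics

section Orders

variable {ι κ : Type*} [LinearOrder ι] [LinearOrder κ] {r : V → ι} {t : ι} {v w : V}
  {A S T : Finset V} {K : Finset (Finset V)} {L : List V} {i : ℕ}

/-- The paper's `S_{≻w}`, as `above r (r w) S`. Total orders on vertex sets are encoded throughout
by functions `r` into a linear order that are injective on the set in question. -/
def above (r : V → ι) (t : ι) (S : Finset V) : Finset V := {v ∈ S | t < r v}

/-- `A` is closed upwards in `S`. For nonempty `A` this is the order condition `A = S_{⪰w}` of star
decomposability; the empty final segment is allowed. -/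
structure IsFinalSegment (r : V → ι) (S A : Finset V) : Prop where
  subset : A ⊆ S
  upper : ∀ a ∈ A, ∀ v ∈ S, r a ≤ r v → v ∈ A

omit [DecidableEq V] in
theorem mem_above : v ∈ above r t S ↔ v ∈ S ∧ t < r v :=
  mem_filter

omit [DecidableEq V] in
theorem above_subset : above r t S ⊆ S :=
  filter_subset _ S

omit [DecidableEq V] in
theorem above_eq_empty : above r t S = ∅ ↔ ∀ v ∈ S, r v ≤ t := by
  simp [above, filter_eq_empty_iff]

theorem inter_above (h : S ⊆ T) : S ∩ above r t T = above r t S := by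
  rw [above, inter_filter, inter_eq_left.2 h, above]

omit [DecidableEq V] in
theorem isFinalSegment_self : IsFinalSegment r S S :=
  ⟨Subset.rfl, fun _ _ _ hv _ => hv⟩

omit [DecidableEq V] in
theorem isFinalSegment_empty : IsFinalSegment r S ∅ :=
  ⟨empty_subset S, by simp⟩

omit [DecidableEq V] in
theorem isFinalSegment_above : IsFinalSegment r S (above r t S) :=
  ⟨above_subset, fun _ ha _ hv hle => mem_above.2 ⟨hv, (mem_above.1 ha).2.trans_le hle⟩⟩

omit [DecidableEq V] in
theorem IsFinalSegment.above_eq (hA : IsFinalSegment r S A) (hw : w ∈ A) :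
    above r (r w) A = above r (r w) S :=
  Subset.antisymm (filter_subset_filter _ hA.subset) fun v hv =>
    let ⟨hvS, hlt⟩ := mem_above.1 hv
    mem_above.2 ⟨hA.upper w hw v hvS hlt.le, hlt⟩

omit [DecidableEq V] in
theorem IsFinalSegment.exists_last (hA : IsFinalSegment r S A) (hne : A.Nonempty) :
    ∃ w ∈ A, above r (r w) S = ∅ := by
  obtain ⟨w, hw, hmax⟩ := A.exists_max_image r hne
  exact ⟨w, hw, hA.above_eq hw ▸ above_eq_empty.2 hmax⟩

omit [DecidableEq V] in
theorem rank_getElem_lt_iff (hL : L.Pairwise fun v w => r v < r w) {j : ℕ} (hi : i < L.length)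
    (hj : j < L.length) : r L[i] < r L[j] ↔ i < j := by
  have hmono : (L.map r).SortedLT := (List.pairwise_map.2 hL).sortedLT
  have h := hmono.getElem_lt_getElem_iff (i := i) (j := j) (hi := by simpa) (hj := by simpa)
  rwa [List.getElem_map, List.getElem_map] at h

omit [DecidableEq V] in
theorem injOn_rank (hL : L.Pairwise fun v w => r v < r w) : Set.InjOn r {v | v ∈ L} := by
  intro v hv w hw h
  obtain ⟨i, hi, rfl⟩ := List.getElem_of_mem hv
  obtain ⟨j, hj, rfl⟩ := List.getElem_of_mem hw
  have hij := (rank_getElem_lt_iff hL hi hj).not.1 h.not_lt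
  have hji := (rank_getElem_lt_iff hL hj hi).not.1 h.not_gt
  congr 1
  omega

omit [DecidableEq V] in
theorem nodup_of_rank_lt (hL : L.Pairwise fun v w => r v < r w) : L.Nodup :=
  hL.imp fun h => ne_of_apply_ne r h.ne

omit [DecidableEq V] in
theorem getElem_mem_drop_iff (hL : L.Nodup) {j : ℕ} (hj : j < L.length) :
    L[j] ∈ L.drop i ↔ i ≤ j := by
  rw [List.mem_drop_iff_getElem]
  constructor
  · rintro ⟨k, hk, h⟩
    have := (hL.getElem_inj_iff).1 h
    omega
  · intro hij
    exact ⟨j - i, by omega, by congr 1; omega⟩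

omit [DecidableEq V] in
theorem mem_drop_iff_le (hL : L.Pairwise fun v w => r v < r w) (hi : i < L.length) (hv : v ∈ L) :
    v ∈ L.drop i ↔ r L[i] ≤ r v := by
  obtain ⟨j, hj, rfl⟩ := List.getElem_of_mem hv
  rw [getElem_mem_drop_iff (nodup_of_rank_lt hL) hj, ← not_lt, ← not_lt,
    rank_getElem_lt_iff hL hj hi]

omit [DecidableEq V] in
theorem mem_drop_succ_iff_lt (hL : L.Pairwise fun v w => r v < r w) (hi : i < L.length)
    (hv : v ∈ L) : v ∈ L.drop (i + 1) ↔ r L[i] < r v := by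
  obtain ⟨j, hj, rfl⟩ := List.getElem_of_mem hv
  rw [getElem_mem_drop_iff (nodup_of_rank_lt hL) hj, rank_getElem_lt_iff hL hi hj,
    Nat.succ_le_iff]

theorem above_toFinset (hL : L.Pairwise fun v w => r v < r w) (hi : i < L.length) :
    above r (r L[i]) L.toFinset = (L.drop (i + 1)).toFinset := by
  ext v
  rw [mem_above, List.mem_toFinset, List.mem_toFinset]
  exact ⟨fun ⟨hv, hlt⟩ => (mem_drop_succ_iff_lt hL hi hv).2 hlt,
    fun hv => ⟨List.mem_of_mem_drop hv,
      (mem_drop_succ_iff_lt hL hi (List.mem_of_mem_drop hv)).1 hv⟩⟩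

theorem exists_pairwise_lt (hr : Set.InjOn r (S : Set V)) :
    ∃ L : List V, L.toFinset = S ∧ L.Pairwise fun v w => r v < r w := by
  induction S using Finset.induction_on_min_value r with
  | empty => exact ⟨[], rfl, List.Pairwise.nil⟩
  | insert v S hv hmin ih =>
    obtain ⟨L, hLS, hL⟩ := ih (hr.mono (by simp))
    refine ⟨v :: L, by rw [List.toFinset_cons, hLS], List.pairwise_cons.2 ⟨fun w hw => ?_, hL⟩⟩
    have hwS : w ∈ S := hLS ▸ List.mem_toFinset.2 hw
    refine (hmin w hwS).lt_of_ne fun h => hv ?_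
    exact hr (mem_insert_self v S) (mem_insert_of_mem hwS) h ▸ hwS

omit [DecidableEq V] in
theorem exists_rank (hL : L.Nodup) : ∃ r : V → ℕ, L.Pairwise fun v w => r v < r w := by
  classical
  refine ⟨fun v => L.idxOf v, List.pairwise_iff_getElem.2 fun i j hi hj hij => ?_⟩
  beta_reduce
  rwa [hL.idxOf_getElem, hL.idxOf_getElem]

theorem isFinalSegment_drop (hL : L.Pairwise fun v w => r v < r w) :
    IsFinalSegment r L.toFinset (L.drop i).toFinset := by
  refine ⟨fun v hv => ?_, fun a ha v hv hle => ?_⟩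
  · simp only [List.mem_toFinset] at hv ⊢
    exact List.mem_of_mem_drop hv
  · simp only [List.mem_toFinset] at ha hv ⊢
    by_cases hi : i < L.length
    · exact (mem_drop_iff_le hL hi hv).2
        (((mem_drop_iff_le hL hi (List.mem_of_mem_drop ha)).1 ha).trans hle)
    · simp [List.drop_eq_nil_of_le (not_lt.1 hi)] at ha

theorem IsFinalSegment.exists_eq_drop (hL : L.Pairwise fun v w => r v < r w)
    (hA : IsFinalSegment r L.toFinset A) (hne : A.Nonempty) :
    ∃ i < L.length, A = (L.drop i).toFinset := by
  obtain ⟨a, ha, hmin⟩ := A.exists_min_image r hne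
  obtain ⟨i, hi, rfl⟩ := List.getElem_of_mem (List.mem_toFinset.1 (hA.subset ha))
  refine ⟨i, hi, ext fun v => ?_⟩
  rw [List.mem_toFinset]
  refine ⟨fun hv => ?_, fun hv => ?_⟩
  · exact (mem_drop_iff_le hL hi (List.mem_toFinset.1 (hA.subset hv))).2 (hmin v hv)
  · have hvL := List.mem_of_mem_drop hv
    exact hA.upper _ ha v (List.mem_toFinset.2 hvL) ((mem_drop_iff_le hL hi hvL).1 hv)

/-- `r` induces a star decomposition of `sd K` in vertices, the order condition aside: that is the
only condition involving `A` for a pair `(sd K, A)`, and it is expressed by `IsFinalSegment`.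
For `K = {∅}` every `r` qualifies. -/
structure IsStarDecOrder (r : V → ι) (K : Finset (Finset V)) : Prop where
  exists_pureDim : ∃ d, PureDim K d
  injOn : Set.InjOn r (verts K : Set V)
  link : ∀ w ∈ verts K, (above r (r w) (verts K)).Nonempty →
    StarDecV (lk {w} K) (above r (r w) (verts (lk {w} K)))
  last : ∀ w ∈ verts K, above r (r w) (verts K) = ∅ → StarDecV (lk {w} K) (verts (lk {w} K))

theorem StarDecV.exists_pureDim (h : StarDecV K A) : ∃ d, PureDim K d := by
  cases h with
  | base => exact ⟨-1, PureDim.singleton_empty⟩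
  | step _ _ k _ hpure => exact ⟨k, hpure⟩

theorem StarDecV.exists_induces (h : StarDecV K A) : ∃ L, InducesStarDecompV L K A := by
  cases h with
  | base => exact ⟨[], .inl ⟨rfl, rfl, rfl⟩⟩
  | step _ _ _ _ _ L hne hnd hV horder hlink hlast =>
    exact ⟨L, .inr ⟨hne, hnd, hV, horder, hlink, hlast⟩⟩

theorem InducesStarDecompV.starDecV (h : InducesStarDecompV L K A) (hK : ∃ d, PureDim K d) :
    StarDecV K A := by
  obtain ⟨rfl, rfl, rfl⟩ | ⟨hne, hnd, hV, horder, hlink, hlast⟩ := h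
  · exact .base
  · obtain ⟨d, hd⟩ := hK
    have hverts : (verts K).Nonempty := hV ▸ List.toFinset_nonempty_iff L |>.2 hne
    exact .step K A d (hd.nonneg hverts) hd L hne hnd hV horder hlink hlast

theorem InducesStarDecompV.eq_singleton_empty (h : InducesStarDecompV L K A) (hA : A = ∅) :
    K = {∅} := by
  obtain ⟨-, rfl, -⟩ | ⟨-, -, -, ⟨i, hi, rfl⟩, -⟩ := h
  · rfl
  · have : i < L.length := hi
    simp at hA
    omega

theorem InducesStarDecompV.isFinalSegment (h : InducesStarDecompV L K A)
    (hL : L.Pairwise fun v w => r v < r w) : IsFinalSegment r (verts K) A := by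
  obtain ⟨rfl, rfl, rfl⟩ | ⟨-, -, hV, ⟨i, -, rfl⟩, -⟩ := h
  · simpa [verts_singleton_empty] using isFinalSegment_self
  · exact hV ▸ isFinalSegment_drop hL

theorem InducesStarDecompV.isStarDecOrder (h : InducesStarDecompV L K A)
    (hL : L.Pairwise fun v w => r v < r w) (hK : ∃ d, PureDim K d) : IsStarDecOrder r K := by
  obtain ⟨rfl, rfl, rfl⟩ | ⟨hne, -, hV, -, hlink, hlast⟩ := h
  · exact ⟨hK, by simp [verts_singleton_empty], by simp [verts_singleton_empty],
      by simp [verts_singleton_empty]⟩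
  have exists_getElem {w : V} (hw : w ∈ verts K) : ∃ i, ∃ hi : i < L.length, L[i] = w :=
    List.getElem_of_mem (List.mem_toFinset.1 (hV ▸ hw))
  refine ⟨hK, ?_, fun w hw hne => ?_, fun w hw hempty => ?_⟩
  · simpa [← hV] using injOn_rank hL
  all_goals
    obtain ⟨i, hi, rfl⟩ := exists_getElem hw
    have habove := above_toFinset hL hi
    rw [hV] at habove
  · have hi' : i + 1 < L.length := by
      by_contra hge
      simp [habove, List.drop_eq_nil_of_le (not_lt.1 hge)] at hne
    rw [← inter_above verts_lk_subset, habove]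
    exact hlink i hi'
  · have hi' : i = L.length - 1 := by
      rw [habove, List.toFinset_eq_empty_iff, List.drop_eq_nil_iff] at hempty
      omega
    subst hi'
    rwa [List.getLast_eq_getElem] at hlast

theorem IsStarDecOrder.inducesStarDecompV (h : IsStarDecOrder r K)
    (hL : L.Pairwise fun v w => r v < r w) (hV : L.toFinset = verts K)
    (hA : IsFinalSegment r (verts K) A) (hne : A.Nonempty) : InducesStarDecompV L K A := by
  have hLne : L ≠ [] := by
    rintro rfl
    exact (hne.mono hA.subset).ne_empty hV.symm
  refine .inr ⟨hLne, nodup_of_rank_lt hL, hV, (hV ▸ hA).exists_eq_drop hL hne, fun i hi => ?_, ?_⟩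
  · have habove := above_toFinset hL (Nat.lt_of_succ_lt hi)
    rw [hV] at habove
    rw [← habove, List.get_eq_getElem, inter_above verts_lk_subset]
    refine h.link _ (hV ▸ by simp) ?_
    rw [habove]
    simp
    omega
  · rw [List.getLast_eq_getElem]
    refine h.last _ (hV ▸ by simp) ?_
    rw [← hV, above_toFinset hL]
    simp
    omega

theorem IsStarDecOrder.starDecV (h : IsStarDecOrder r K) (hA : IsFinalSegment r (verts K) A)
    (hempty : A = ∅ → K = {∅}) : StarDecV K A := by
  obtain rfl | hne := A.eq_empty_or_nonempty
  · exact hempty rfl ▸ .base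
  obtain ⟨L, hLK, hL⟩ := exists_pairwise_lt h.injOn
  exact (h.inducesStarDecompV hL hLK hA hne).starDecV h.exists_pureDim

theorem StarDecV.exists_order (h : StarDecV K A) :
    ∃ r : V → ℕ, IsStarDecOrder r K ∧ IsFinalSegment r (verts K) A ∧ (A = ∅ → K = {∅}) := by
  obtain ⟨L, hL⟩ := h.exists_induces
  have hnd : L.Nodup := by
    obtain ⟨rfl, -⟩ | ⟨-, hnd, -⟩ := hL
    exacts [List.nodup_nil, hnd]
  obtain ⟨r, hr⟩ := exists_rank hnd
  exact ⟨r, hL.isStarDecOrder hr h.exists_pureDim, hL.isFinalSegment hr, hL.eq_singleton_empty⟩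

theorem StarDecV.eq_empty_of_verts_eq_empty (h : StarDecV K A) (hverts : verts K = ∅) :
    K = {∅} ∧ A = ∅ := by
  obtain ⟨r, hr, hA, -⟩ := h.exists_order
  exact ⟨eq_singleton_empty hr.exists_pureDim.choose_spec.1 hverts,
    subset_empty.1 (hverts ▸ hA.subset)⟩

theorem StarDecV.nonempty (h : StarDecV K A) (hverts : (verts K).Nonempty) : A.Nonempty := by
  obtain ⟨_, -, -, hempty⟩ := h.exists_order
  refine nonempty_iff_ne_empty.2 fun hA => hverts.ne_empty ?_
  rw [hempty hA, verts_singleton_empty]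

theorem IsStarDecOrder.isFinalSegment_singleton (h : IsStarDecOrder r K) (hw : w ∈ verts K)
    (hlast : above r (r w) (verts K) = ∅) : IsFinalSegment r (verts K) {w} := by
  refine ⟨singleton_subset_iff.2 hw, ?_⟩
  simp only [mem_singleton, forall_eq]
  exact fun v hv hle => h.injOn hv hw (hle.antisymm' (above_eq_empty.1 hlast v hv))

theorem IsStarDecOrder.link_of_ne_last (h : IsStarDecOrder r K) (hw : w ∈ verts K)
    (hlast : above r (r w) (verts K) = ∅) (hv : v ∈ verts K) (hne : v ≠ w) :
    StarDecV (lk {v} K) (above r (r v) (verts (lk {v} K))) :=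
  h.link v hv ⟨w, mem_above.2 ⟨hw, (above_eq_empty.1 hlast v hv).lt_of_ne fun hvw =>
    hne (h.injOn hv hw hvw)⟩⟩

theorem IsStarDecOrder.congr {s : V → κ} (h : IsStarDecOrder r K)
    (hrs : ∀ v ∈ verts K, ∀ w ∈ verts K, r v < r w ↔ s v < s w) : IsStarDecOrder s K := by
  have above_eq {S : Finset V} {w : V} (hS : S ⊆ verts K) (hw : w ∈ verts K) :
      above s (s w) S = above r (r w) S :=
    filter_congr fun v hv => (hrs w hw v (hS hv)).symm
  refine ⟨h.exists_pureDim, fun v hv w hw hvw => h.injOn hv hw ?_, fun w hw hne => ?_,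
    fun w hw hempty => ?_⟩
  · exact le_antisymm (not_lt.1 <| (hrs w hw v hv).not.2 hvw.not_gt)
      (not_lt.1 <| (hrs v hv w hw).not.2 hvw.not_lt)
  · rw [above_eq verts_lk_subset hw]
    exact h.link w hw (above_eq Subset.rfl hw ▸ hne)
  · exact h.last w hw (above_eq Subset.rfl hw ▸ hempty)

end Orders

section EulerCharacteristic

variable {ι : Type*} [LinearOrder ι] {r : V → ι} {v w : V} {S : Finset V} {K : Finset (Finset V)}

theorem mem_induced {σ : Finset V} : σ ∈ induced S K ↔ σ ∈ K ∧ σ ⊆ S :=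
  mem_filter

theorem induced_verts_inter : induced (verts K ∩ S) K = induced S K :=
  filter_congr fun _ hσ => by rw [subset_inter_iff, and_iff_right (subset_verts hσ)]

theorem induced_above_verts_lk :
    induced (above r (r w) (verts (lk {w} K))) (lk {w} K) =
      induced (above r (r w) (verts K)) (lk {w} K) := by
  rw [← inter_above verts_lk_subset, induced_verts_inter]

theorem redEuler_eq_neg_sum (hK : ∅ ∈ K) : redEuler K = -∑ σ ∈ K, (-1) ^ #σ := by
  rw [redEuler, filter_ne', ← add_sum_erase K _ hK, card_empty, pow_zero, neg_add_rev,
    ← sum_neg_distrib, sub_eq_add_neg]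
  congr 1
  refine sum_congr rfl fun σ hσ => ?_
  rw [← Nat.sub_add_cancel (card_pos.2 (nonempty_iff_ne_empty.2 (ne_of_mem_erase hσ))), pow_succ]
  simp

theorem redEuler_induced_empty : redEuler (induced ∅ K) = -1 := by
  have : (induced ∅ K).filter (fun σ => σ ≠ ∅) = ∅ :=
    filter_eq_empty_iff.2 fun σ hσ => not_not.2 (subset_empty.1 (mem_induced.1 hσ).2)
  rw [redEuler, this, sum_empty, zero_sub]

theorem nonempty_of_redEuler_induced_eq_zero (h : redEuler (induced S K) = 0) : S.Nonempty := by
  refine nonempty_iff_ne_empty.2 ?_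
  rintro rfl
  rw [redEuler_induced_empty] at h
  omega

theorem induced_insert :
    induced (insert w S) K = induced S K ∪ (induced S (lk {w} K)).image (insert w) := by
  ext σ
  simp only [mem_union, mem_image, mem_induced, mem_lk]
  constructor
  · rintro ⟨hσ, hσS⟩
    by_cases hwσ : w ∈ σ
    · exact .inr ⟨σ.erase w, ⟨⟨notMem_erase w σ, by rwa [insert_erase hwσ]⟩,
        subset_insert_iff.1 hσS⟩, insert_erase hwσ⟩
    · exact .inl ⟨hσ, (subset_insert_iff_of_notMem hwσ).1 hσS⟩
  · rintro (⟨hσ, hσS⟩ | ⟨τ, ⟨⟨-, hτ⟩, hτS⟩, rfl⟩)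
    exacts [⟨hσ, hσS.trans (subset_insert w S)⟩, ⟨hτ, insert_subset_insert w hτS⟩]

theorem redEuler_induced_insert (hK : IsCplx K) (hw : w ∈ verts K) (hwS : w ∉ S) :
    redEuler (induced (insert w S) K) =
      redEuler (induced S K) - redEuler (induced S (lk {w} K)) := by
  have empty_mem {T : Finset V} : ∅ ∈ induced T K :=
    mem_induced.2 ⟨hK.empty_mem ⟨_, hK.singleton_mem hw⟩, empty_subset T⟩
  have empty_mem_lk : ∅ ∈ induced S (lk {w} K) :=
    mem_induced.2 ⟨hK.empty_mem_lk hw, empty_subset S⟩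
  have notMem_of_mem {τ : Finset V} (hτ : τ ∈ induced S (lk {w} K)) : w ∉ τ :=
    fun h => hwS ((mem_induced.1 hτ).2 h)
  have disj : Disjoint (induced S K) ((induced S (lk {w} K)).image (insert w)) := by
    simp only [disjoint_left, mem_image, not_exists, not_and]
    rintro _ hσ τ - rfl
    exact hwS ((mem_induced.1 hσ).2 (mem_insert_self w τ))
  have sum_faces_at : ∑ σ ∈ (induced S (lk {w} K)).image (insert w), (-1 : ℤ) ^ #σ =
      -∑ τ ∈ induced S (lk {w} K), (-1) ^ #τ := by
    rw [sum_image fun σ hσ τ hτ h => by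
      rw [← erase_insert (notMem_of_mem hσ), h, erase_insert (notMem_of_mem hτ)],
      ← sum_neg_distrib]
    exact sum_congr rfl fun τ hτ => by
      rw [card_insert_of_notMem (notMem_of_mem hτ), pow_succ, mul_neg_one]
  rw [redEuler_eq_neg_sum empty_mem, redEuler_eq_neg_sum empty_mem,
    redEuler_eq_neg_sum empty_mem_lk, induced_insert, sum_union disj, sum_faces_at]
  ring

theorem redEuler_induced_singleton (hK : IsCplx K) (hv : v ∈ verts K) :
    redEuler (induced {v} K) = 0 := by
  rw [← insert_empty_eq, redEuler_induced_insert hK hv (notMem_empty v), redEuler_induced_empty,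
    redEuler_induced_empty, sub_self]

-- Classifies the faces by their `r`-smallest vertex.
theorem redEuler_induced_eq_sum (hK : IsCplx K) (hS : S ⊆ verts K)
    (hr : ∀ σ ∈ K, σ ⊆ S → Set.InjOn r (σ : Set V)) :
    redEuler (induced S K) =
      -1 - ∑ w ∈ S, redEuler (induced (above r (r w) S) (lk {w} K)) := by
  induction S using Finset.induction_on_min_value r with
  | empty => rw [redEuler_induced_empty, sum_empty, sub_zero]
  | insert w S hwS hmin ih =>
    have hlk : induced (above r (r w) (insert w S)) (lk {w} K) = induced S (lk {w} K) := by
      ext τ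
      simp only [mem_induced, and_congr_right_iff]
      intro hτ
      obtain ⟨hwτ, hins⟩ := mem_lk.1 hτ
      refine ⟨fun h v hv => ?_, fun h v hv => mem_above.2 ⟨mem_insert_of_mem (h hv), ?_⟩⟩
      · have := mem_above.1 (h hv)
        exact mem_of_mem_insert_of_ne this.1 (by rintro rfl; exact this.2.false)
      · refine (hmin v (h hv)).lt_of_ne fun heq => hwτ ?_
        have := hr _ hins (insert_subset_insert w h) (mem_insert_self w τ)
          (mem_insert_of_mem hv) heq
        exact this ▸ hv
    have habove {v : V} (hv : v ∈ S) : above r (r v) (insert w S) = above r (r v) S := by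
      rw [above, filter_insert, if_neg (hmin v hv).not_gt, above]
    rw [redEuler_induced_insert hK (hS (mem_insert_self w S)) hwS, sum_insert hwS, hlk,
      sum_congr rfl fun v hv => by rw [habove hv], ih ((subset_insert w S).trans hS)
        fun σ hσ hσS => hr σ hσ (hσS.trans (subset_insert w S))]
    ring

theorem IsStarDecOrder.redEuler_induced (h : IsStarDecOrder r K) (hK : IsCplx K)
    (hS : IsFinalSegment r (verts K) S) (hwS : w ∈ S) (hlast : above r (r w) (verts K) = ∅) :
    redEuler (induced S K) =
      -∑ v ∈ S.erase w, redEuler (induced (above r (r v) (verts (lk {v} K))) (lk {v} K)) := by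
  have hsum := redEuler_induced_eq_sum (r := r) hK hS.subset fun σ hσ _ =>
    h.injOn.mono (coe_subset.2 (subset_verts hσ))
  rw [← add_sum_erase S _ hwS, hS.above_eq hwS, hlast, redEuler_induced_empty] at hsum
  rw [hsum, sum_congr rfl fun v hv => by
    rw [hS.above_eq (mem_of_mem_erase hv), ← induced_above_verts_lk]]
  ring

theorem StarDecV.redEuler_sign {n : ℕ} (h : StarDecV K S) (hK : IsCplx K)
    (hd : PureDim K (n - 1)) : 0 ≤ (-1) ^ (n + 1) * redEuler (induced S K) := by
  induction n generalizing K S with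
  | zero =>
    obtain ⟨r, -, hS, -⟩ := h.exists_order
    have hverts : verts K = ∅ :=
      not_nonempty_iff_eq_empty.1 fun hne => absurd (hd.nonneg hne) (by simp)
    simp [subset_empty.1 (hverts ▸ hS.subset), redEuler_induced_empty]
  | succ n ih =>
    obtain ⟨r, hr, hS, hempty⟩ := h.exists_order
    have hne : S.Nonempty := nonempty_iff_ne_empty.2 fun hS => by
      obtain rfl := hempty hS
      have := hd.unique PureDim.singleton_empty
      omega
    obtain ⟨w, hwS, hlast⟩ := hS.exists_last hne
    have link_sign : ∀ v ∈ S.erase w, 0 ≤ (-1) ^ (n + 1) *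
        redEuler (induced (above r (r v) (verts (lk {v} K))) (lk {v} K)) := fun v hv => by
      have hvK := hS.subset (mem_of_mem_erase hv)
      exact ih (hr.link_of_ne_last (hS.subset hwS) hlast hvK (ne_of_mem_erase hv)) hK.lk
        (by simpa using hd.lk hvK)
    calc 0 ≤ ∑ v ∈ S.erase w, _ := sum_nonneg link_sign
      _ = (-1) ^ (n + 1 + 1) * redEuler (induced S K) := by
        rw [← mul_sum, hr.redEuler_induced hK hS hwS hlast]
        ring

-- The link terms of `IsStarDecOrder.redEuler_induced` have the same sign by
-- `StarDecV.redEuler_sign`, so they vanish if their sum does.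
theorem IsStarDecOrder.redEuler_link_eq_zero (h : IsStarDecOrder r K) (hK : IsCplx K)
    (hS : IsFinalSegment r (verts K) S) (hzero : redEuler (induced S K) = 0) (hv : v ∈ S)
    (hne : (above r (r v) (verts K)).Nonempty) :
    redEuler (induced (above r (r v) (verts (lk {v} K))) (lk {v} K)) = 0 := by
  obtain ⟨w, hwS, hlast⟩ := hS.exists_last ⟨v, hv⟩
  obtain ⟨d, hd⟩ := h.exists_pureDim
  lift d to ℕ using hd.nonneg ⟨v, hS.subset hv⟩ with n
  have link_sign : ∀ u ∈ S.erase w, 0 ≤ (-1) ^ (n + 1) *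
      redEuler (induced (above r (r u) (verts (lk {u} K))) (lk {u} K)) := fun u hu => by
    have huK := hS.subset (mem_of_mem_erase hu)
    exact (h.link_of_ne_last (hS.subset hwS) hlast huK (ne_of_mem_erase hu)).redEuler_sign
      hK.lk (hd.lk huK)
  have hsum := h.redEuler_induced hK hS hwS hlast
  rw [hzero, zero_eq_neg] at hsum
  have hvw : v ≠ w := by
    rintro rfl
    exact hne.ne_empty hlast
  have := (sum_eq_zero_iff_of_nonneg link_sign).1 (by rw [← mul_sum, hsum, mul_zero]) v
    (mem_erase.2 ⟨hvw, hv⟩)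
  simpa using this

end EulerCharacteristic

section Homology

variable {K : Finset (Finset V)}

omit [DecidableEq V] in
theorem sum_neg_one_pow_card_eq :
    ∑ σ ∈ K, (-1 : ℤ) ^ #σ = ∑ n ∈ range (K.sup card + 1), (-1) ^ n * (#(kfaces K n) : ℤ) := by
  rw [← sum_fiberwise_of_maps_to (t := range (K.sup card + 1)) (g := card) fun σ hσ =>
    mem_range_succ_iff.2 (le_sup (f := card) hσ)]
  refine sum_congr rfl fun n _ => ?_
  rw [sum_congr rfl fun σ hσ => by rw [(mem_filter.1 hσ).2], sum_const, nsmul_eq_mul, mul_comm,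
    kfaces]

theorem finrank_range_bdryZ_add_finrank_ker (n : ℕ) :
    Module.finrank ℤ (bdryZ K n).range + Module.finrank ℤ (bdryZ K n).ker =
      #(kfaces K (n + 1)) := by
  rw [← (bdryZ K n).quotKerEquivRange.finrank_eq, Submodule.finrank_quotient_add_finrank,
    Module.finrank_fintype_fun_eq_card, Fintype.card_coe]

theorem TrivialRedHomology.redEuler_eq_zero (h : TrivialRedHomology K) (hK : IsCplx K) :
    redEuler K = 0 := by
  obtain ⟨hne, htop, hexact⟩ := h
  have card_zero : #(kfaces K 0) = Module.finrank ℤ (bdryZ K 0).range := by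
    rw [htop, finrank_top, Module.finrank_fintype_fun_eq_card, Fintype.card_coe]
  have card_succ (n : ℕ) : #(kfaces K (n + 1)) =
      Module.finrank ℤ (bdryZ K n).range + Module.finrank ℤ (bdryZ K (n + 1)).range := by
    rw [← finrank_range_bdryZ_add_finrank_ker, hexact n]
  have telescope (N : ℕ) : ∑ n ∈ range (N + 1), (-1) ^ n * (#(kfaces K n) : ℤ) =
      (-1) ^ N * Module.finrank ℤ (bdryZ K N).range := by
    induction N with
    | zero => simp [card_zero]
    | succ N ih =>
      rw [sum_range_succ, ih, card_succ]
      push_cast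
      ring
  have no_faces : #(kfaces K (K.sup card + 1)) = 0 :=
    card_eq_zero.2 <| filter_eq_empty_iff.2 fun σ hσ =>
      (Nat.lt_succ_of_le (le_sup (f := card) hσ)).ne
  have hrank := card_succ (K.sup card)
  rw [no_faces] at hrank
  rw [redEuler_eq_neg_sum (hK.empty_mem hne), sum_neg_one_pow_card_eq, telescope,
    (Nat.add_eq_zero_iff.1 hrank.symm).1]
  simp

end Homology

section OrderComplex

variable {K Q : Finset (Finset V)} {S σ : Finset V}

/-- The order complex of the poset `Q`, ordered by inclusion: its faces are the chains in `Q`. -/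
def orderComplex (Q : Finset (Finset V)) : Finset (Finset (Finset V)) :=
  {c ∈ Q.powerset | ∀ σ ∈ c, ∀ τ ∈ c, σ ⊆ τ ∨ τ ⊆ σ}

/-- The members of `K` that meet `S`. They are the vertices of `st(S, sd K)`, which is their order
complex. -/
def meeting (S : Finset V) (K : Finset (Finset V)) : Finset (Finset V) :=
  {σ ∈ K | (σ ∩ S).Nonempty}

theorem mem_orderComplex {c : Finset (Finset V)} :
    c ∈ orderComplex Q ↔ c ⊆ Q ∧ ∀ σ ∈ c, ∀ τ ∈ c, σ ⊆ τ ∨ τ ⊆ σ := by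
  rw [orderComplex, mem_filter, mem_powerset]

theorem isCplx_orderComplex : IsCplx (orderComplex Q) := fun c hc d hd => by
  rw [mem_orderComplex] at hc ⊢
  exact ⟨hd.trans hc.1, fun σ hσ τ hτ => hc.2 σ (hd hσ) τ (hd hτ)⟩

theorem singleton_mem_orderComplex (hσ : σ ∈ Q) : {σ} ∈ orderComplex Q :=
  mem_orderComplex.2 ⟨singleton_subset_iff.2 hσ, by simp⟩

theorem induced_orderComplex : induced Q (orderComplex Q) = orderComplex Q :=
  filter_true_of_mem fun _ hc => (mem_orderComplex.1 hc).1

theorem mem_meeting : σ ∈ meeting S K ↔ σ ∈ K ∧ (σ ∩ S).Nonempty :=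
  mem_filter

-- Classifies the chains by their largest element.
theorem redEuler_orderComplex_eq_sum (Q : Finset (Finset V)) :
    redEuler (orderComplex Q) = -1 - ∑ σ ∈ Q, redEuler (orderComplex {τ ∈ Q | τ ⊂ σ}) := by
  let r (σ : Finset V) : ℕᵒᵈ := .toDual #σ
  have r_lt {σ τ : Finset V} : r σ < r τ ↔ #τ < #σ := OrderDual.toDual_lt_toDual
  have hr (c : Finset (Finset V)) (hc : c ∈ orderComplex Q) : Set.InjOn r (c : Set (Finset V)) := by
    intro σ hσ τ hτ h
    replace h : #σ = #τ := OrderDual.toDual.injective h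
    obtain hsub | hsub := (mem_orderComplex.1 hc).2 σ hσ τ hτ
    exacts [eq_of_subset_of_card_le hsub h.ge, (eq_of_subset_of_card_le hsub h.le).symm]
  have hlk {σ : Finset V} (hσ : σ ∈ Q) : induced (above r (r σ) Q) (lk {σ} (orderComplex Q)) =
      orderComplex {τ ∈ Q | τ ⊂ σ} := by
    ext c
    simp only [mem_induced, mem_lk, mem_orderComplex, forall_mem_insert]
    constructor
    · rintro ⟨⟨hσc, hcQ, ⟨-, hcσ⟩, hc⟩, habove⟩
      refine ⟨fun τ hτ => ?_, fun τ hτ => (hc τ hτ).2⟩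
      have hlt := r_lt.1 (mem_above.1 (habove hτ)).2
      refine mem_filter.2 ⟨hcQ (mem_insert_of_mem hτ), ?_⟩
      exact ((hcσ τ hτ).resolve_left fun h => (card_le_card h).not_gt hlt).ssubset_of_ne
        fun h => hσc (h ▸ hτ)
    · rintro ⟨hcQ, hc⟩
      have ssubset {τ : Finset V} (hτ : τ ∈ c) : τ ⊂ σ := (mem_filter.1 (hcQ hτ)).2
      refine ⟨⟨fun h => ssubset_irrefl σ (ssubset h),
        insert_subset hσ (hcQ.trans (filter_subset _ _)),
        ⟨.inl Subset.rfl, fun τ hτ => .inr (ssubset hτ).subset⟩,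
        fun τ hτ => ⟨.inl (ssubset hτ).subset, hc τ hτ⟩⟩, fun τ hτ => ?_⟩
      exact mem_above.2 ⟨(mem_filter.1 (hcQ hτ)).1, r_lt.2 (card_lt_card (ssubset hτ))⟩
  have hsum := redEuler_induced_eq_sum (r := r) (S := Q) isCplx_orderComplex
    (fun σ hσ => mem_verts.2 ⟨{σ}, singleton_mem_orderComplex hσ, mem_singleton_self σ⟩)
    fun c hc _ => hr c hc
  rw [induced_orderComplex] at hsum
  rw [hsum, sum_congr rfl fun σ hσ => by rw [hlk hσ]]

theorem filter_ssubset_meeting (hK : IsCplx K) (hσ : σ ∈ K) :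
    {τ ∈ meeting S K | τ ⊂ σ} = meeting S σ.ssubsets := by
  ext τ
  simp only [mem_filter, mem_meeting, mem_ssubsets]
  exact ⟨fun h => ⟨h.2, h.1.2⟩, fun h => ⟨⟨hK σ hσ τ h.1.subset, h.2⟩, h.1⟩⟩

theorem redEuler_orderComplex_meeting_eq_sum (hK : IsCplx K) :
    redEuler (orderComplex (meeting S K)) =
      -1 - ∑ σ ∈ meeting S K, redEuler (orderComplex (meeting S σ.ssubsets)) := by
  rw [redEuler_orderComplex_eq_sum, sum_congr rfl fun σ hσ => by
    rw [filter_ssubset_meeting hK (mem_meeting.1 hσ).1]]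

theorem sum_meeting_ite_subset (hK : ∅ ∈ K) :
    ∑ σ ∈ meeting S K, (if σ ⊆ S then (-1) ^ #σ else 0) = -1 - redEuler (induced S K) := by
  have hmem : ∅ ∈ induced S K := mem_induced.2 ⟨hK, empty_subset S⟩
  have hfilter : {σ ∈ meeting S K | σ ⊆ S} = (induced S K).erase ∅ := by
    ext σ
    simp only [mem_filter, mem_meeting, mem_erase, mem_induced]
    constructor
    · rintro ⟨⟨hσ, hne⟩, hsub⟩
      exact ⟨(hne.mono inter_subset_left).ne_empty, hσ, hsub⟩
    · rintro ⟨hne, hσ, hsub⟩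
      exact ⟨⟨hσ, by rwa [inter_eq_left.2 hsub, nonempty_iff_ne_empty]⟩, hsub⟩
  rw [← sum_filter, hfilter, redEuler_eq_neg_sum hmem, ← add_sum_erase _ _ hmem]
  simp

theorem redEuler_induced_powerset (hσ : (σ ∩ S).Nonempty) :
    redEuler (induced S σ.powerset) = 0 := by
  have : induced S σ.powerset = (σ ∩ S).powerset := by
    ext τ
    rw [mem_induced, mem_powerset, mem_powerset, subset_inter_iff]
  rw [this, redEuler_eq_neg_sum (empty_mem_powerset _),
    sum_powerset_neg_one_pow_card_of_nonempty hσ, neg_zero]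

theorem redEuler_orderComplex_meeting_ssubsets (hσ : (σ ∩ S).Nonempty) :
    redEuler (orderComplex (meeting S σ.ssubsets)) = if σ ⊆ S then (-1) ^ #σ else 0 := by
  induction σ using Finset.strongInduction with
  | H σ ih =>
    have hcplx : IsCplx σ.ssubsets := fun τ hτ ρ hρ =>
      mem_ssubsets.2 (hρ.trans_ssubset (mem_ssubsets.1 hτ))
    have hinsert : meeting S σ.powerset = insert σ (meeting S σ.ssubsets) := by
      rw [← insert_erase (mem_powerset_self σ), meeting, filter_insert, if_pos hσ, meeting,
        ssubsets]
    have hsum := sum_meeting_ite_subset (S := S) (empty_mem_powerset σ)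
    rw [hinsert, sum_insert (by simp [mem_meeting]), redEuler_induced_powerset hσ] at hsum
    rw [redEuler_orderComplex_meeting_eq_sum hcplx, sum_congr rfl fun τ hτ =>
      ih τ (mem_ssubsets.1 (mem_meeting.1 hτ).1) (mem_meeting.1 hτ).2]
    linarith

theorem redEuler_orderComplex_meeting (hK : IsCplx K) (hne : K.Nonempty) :
    redEuler (orderComplex (meeting S K)) = redEuler (induced S K) := by
  rw [redEuler_orderComplex_meeting_eq_sum hK, sum_congr rfl fun σ hσ =>
    redEuler_orderComplex_meeting_ssubsets (mem_meeting.1 hσ).2,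
    sum_meeting_ite_subset (hK.empty_mem hne)]
  ring

theorem mem_sd {c : Finset (Finset V)} (hK : K.Nonempty) :
    c ∈ sd K ↔ c ⊆ K ∧ ∅ ∉ c ∧ ∀ σ ∈ c, ∀ τ ∈ c, σ ⊆ τ ∨ τ ⊆ σ := by
  rw [sd, if_neg hK.ne_empty, mem_filter, mem_powerset]

theorem exists_forall_mem_of_mem_orderComplex {c : Finset (Finset V)}
    (hc : c ∈ orderComplex (meeting S K)) (hS : S.Nonempty) : ∃ v ∈ S, ∀ σ ∈ c, v ∈ σ := by
  obtain ⟨hsub, hchain⟩ := mem_orderComplex.1 hc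
  obtain rfl | hne := c.eq_empty_or_nonempty
  · exact ⟨hS.choose, hS.choose_spec, by simp⟩
  obtain ⟨σ, hσ, hmin⟩ := c.exists_min_image card hne
  obtain ⟨v, hv⟩ := (mem_meeting.1 (hsub hσ)).2
  rw [mem_inter] at hv
  refine ⟨v, hv.2, fun τ hτ => ?_⟩
  obtain h | h := hchain σ hσ τ hτ
  exacts [h hv.1, eq_of_subset_of_card_le h (hmin τ hτ) ▸ hv.1]

theorem starSet_image_singleton_sd (hK : IsCplx K) (hS : S ⊆ verts K) (hne : S.Nonempty) :
    starSet (S.image fun v => ({v} : Finset V)) (sd K) = orderComplex (meeting S K) := by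
  obtain ⟨s, hs⟩ := hne
  have hKne : K.Nonempty := ⟨{s}, hK.singleton_mem (hS hs)⟩
  ext c
  simp only [starSet, mem_filter, exists_mem_image, mem_sd hKne]
  constructor
  · rintro ⟨⟨hcK, hempty, hchain⟩, v, hv, -, -, hchain'⟩
    refine mem_orderComplex.2
      ⟨fun σ hσ => mem_meeting.2 ⟨hcK hσ, v, mem_inter.2 ⟨?_, hv⟩⟩, hchain⟩
    obtain h | h := hchain' σ (by simp [hσ]) {v} (by simp)
    · obtain rfl | rfl := subset_singleton_iff.1 h
      exacts [absurd hσ hempty, mem_singleton_self v]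
    · exact singleton_subset_iff.1 h
  · intro hc
    obtain ⟨hsub, hchain⟩ := mem_orderComplex.1 hc
    obtain ⟨v, hvS, hv⟩ := exists_forall_mem_of_mem_orderComplex hc ⟨s, hs⟩
    have hcK : c ⊆ K := hsub.trans (filter_subset _ _)
    have hempty : ∅ ∉ c := fun h => notMem_empty v (hv ∅ h)
    refine ⟨⟨hcK, hempty, hchain⟩, v, hvS, ?_, ?_, ?_⟩
    · exact union_subset hcK (singleton_subset_iff.2 (hK.singleton_mem (hS hvS)))
    · simp [hempty, (singleton_ne_empty v).symm]
    · grind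

theorem redEuler_induced_eq_zero_of_trivialRedHomology (hK : IsCplx K) (hS : S ⊆ verts K)
    (hne : S.Nonempty)
    (h : TrivialRedHomology (starSet (S.image fun v => ({v} : Finset V)) (sd K))) :
    redEuler (induced S K) = 0 := by
  have hKne : K.Nonempty := ⟨_, hK.singleton_mem (hS hne.choose_spec)⟩
  rw [starSet_image_singleton_sd hK hS hne] at h
  rw [← redEuler_orderComplex_meeting hK hKne, h.redEuler_eq_zero isCplx_orderComplex]

end OrderComplex

section Relabel

variable {W : Type*} [DecidableEq W] {f : V ↪ W} {K : Finset (Finset V)} {A : Finset V} {v : V}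
  {d : ℤ}

/-- The copy of the complex `K` along `f`. -/
def relabel (f : V ↪ W) (K : Finset (Finset V)) : Finset (Finset W) :=
  K.map (mapEmbedding f).toEmbedding

omit [DecidableEq V] [DecidableEq W] in
theorem mem_relabel {τ : Finset W} : τ ∈ relabel f K ↔ ∃ σ ∈ K, σ.map f = τ := by
  simp [relabel]

theorem verts_relabel : verts (relabel f K) = (verts K).map f := by
  ext w
  simp only [mem_verts, mem_relabel, mem_map]
  grind

theorem lk_relabel : lk {f v} (relabel f K) = relabel f (lk {v} K) := by
  ext τ
  simp only [mem_lk, mem_relabel]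
  constructor
  · rintro ⟨hv, σ, hσ, h⟩
    have hvσ : v ∈ σ := (mem_map' f).1 (h ▸ mem_insert_self (f v) τ)
    refine ⟨σ.erase v, ⟨notMem_erase v σ, by rwa [insert_erase hvσ]⟩, ?_⟩
    rw [map_erase, h, erase_insert hv]
  · rintro ⟨σ, ⟨hv, hσ⟩, rfl⟩
    exact ⟨(mem_map' f).not.2 hv, _, hσ, map_insert f v σ⟩

omit [DecidableEq V] [DecidableEq W] in
theorem PureDim.relabel (hK : PureDim K d) : PureDim (relabel f K) d := by
  simpa [PureDim, Paper.relabel] using hK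

theorem map_list_toFinset (f : V ↪ W) (L : List V) : L.toFinset.map f = (L.map f).toFinset := by
  ext w
  simp

theorem StarDecV.relabel (f : V ↪ W) (h : StarDecV K A) :
    StarDecV (relabel f K) (A.map f) := by
  induction h with
  | base => exact .base
  | step Y Y₀ k hk hpure L hne hnd hV horder _ _ ihlink ihlast =>
    obtain ⟨i, hi, rfl⟩ := horder
    refine .step _ _ k hk hpure.relabel (L.map f) (by simpa) (hnd.map f.injective) ?_
      ⟨i, by simpa, ?_⟩ (fun j hj => ?_) ?_
    · rw [← map_list_toFinset, hV, verts_relabel]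
    · rw [map_list_toFinset, List.map_drop]
    · have h := ihlink j (by simpa using hj)
      rw [← lk_relabel, map_inter, ← verts_relabel, ← lk_relabel, map_list_toFinset,
        List.map_drop] at h
      simpa only [List.get_eq_getElem, List.getElem_map] using h
    · rw [← lk_relabel, ← verts_relabel, ← lk_relabel] at ihlast
      simpa only [List.getLast_map] using ihlast

end Relabel

section Joins

variable {α β ι : Type*} [DecidableEq α] [DecidableEq β] [LinearOrder ι] {r : α ⊕ β → ι} {t : ι}
  {X : Finset (Finset α)} {Y : Finset (Finset β)} {x : α} {y : β}

theorem image_inl_union_image_inr (A : Finset α) (B : Finset β) :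
    A.image Sum.inl ∪ B.image Sum.inr = A.disjSum B := by
  ext (a | b) <;> simp

theorem mem_join {ρ : Finset (α ⊕ β)} : ρ ∈ join X Y ↔ ρ.toLeft ∈ X ∧ ρ.toRight ∈ Y := by
  simp only [join, mem_image, mem_product, image_inl_union_image_inr, Prod.exists]
  constructor
  · rintro ⟨σ, τ, hστ, rfl⟩
    rwa [toLeft_disjSum, toRight_disjSum]
  · exact fun h => ⟨_, _, h, toLeft_disjSum_toRight⟩

theorem disjSum_mem_join {σ : Finset α} {τ : Finset β} :
    σ.disjSum τ ∈ join X Y ↔ σ ∈ X ∧ τ ∈ Y := by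
  rw [mem_join, toLeft_disjSum, toRight_disjSum]

theorem verts_join (hX : X.Nonempty) (hY : Y.Nonempty) :
    verts (join X Y) = (verts X).disjSum (verts Y) := by
  ext (x | y)
  · rw [inl_mem_disjSum, mem_verts, mem_verts]
    constructor
    · rintro ⟨ρ, hρ, hx⟩
      exact ⟨_, (mem_join.1 hρ).1, mem_toLeft.2 hx⟩
    · rintro ⟨σ, hσ, hx⟩
      exact ⟨_, disjSum_mem_join.2 ⟨hσ, hY.choose_spec⟩, inl_mem_disjSum.2 hx⟩
  · rw [inr_mem_disjSum, mem_verts, mem_verts]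
    constructor
    · rintro ⟨ρ, hρ, hy⟩
      exact ⟨_, (mem_join.1 hρ).2, mem_toRight.2 hy⟩
    · rintro ⟨τ, hτ, hy⟩
      exact ⟨_, disjSum_mem_join.2 ⟨hX.choose_spec, hτ⟩, inr_mem_disjSum.2 hy⟩

theorem lk_inl_join : lk {.inl x} (join X Y) = join (lk {x} X) Y := by
  ext ρ
  rw [mem_lk, mem_join, mem_join, mem_lk, toLeft_insert_inl, toRight_insert_inl, mem_toLeft,
    and_assoc]

theorem lk_inr_join : lk {.inr y} (join X Y) = join X (lk {y} Y) := by
  ext ρ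
  rw [mem_lk, mem_join, mem_join, mem_lk, toLeft_insert_inr, toRight_insert_inr, mem_toRight,
    and_left_comm]

theorem PureDim.join {d e : ℤ} (hX : PureDim X d) (hY : PureDim Y e) :
    PureDim (join X Y) (d + e + 1) := by
  refine ⟨⟨_, disjSum_mem_join.2 ⟨hX.1.choose_spec, hY.1.choose_spec⟩⟩, fun ρ hρ => ?_,
    fun ρ hρ => ?_⟩
  all_goals rw [mem_join] at hρ
  · have := hX.2.1 _ hρ.1
    have := hY.2.1 _ hρ.2
    have := card_toLeft_add_card_toRight (u := ρ)
    omega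
  · obtain ⟨σ, hσ, hρσ, hσd⟩ := hX.2.2 _ hρ.1
    obtain ⟨τ, hτ, hρτ, hτe⟩ := hY.2.2 _ hρ.2
    refine ⟨σ.disjSum τ, disjSum_mem_join.2 ⟨hσ, hτ⟩, subset_disjSum.2 ⟨hρσ, hρτ⟩, ?_⟩
    rw [card_disjSum]
    push_cast
    linarith

omit [DecidableEq α] [DecidableEq β] in
theorem above_disjSum (A : Finset α) (B : Finset β) :
    above r t (A.disjSum B) = (above (r ∘ Sum.inl) t A).disjSum (above (r ∘ Sum.inr) t B) := by
  ext (a | b) <;> simp [mem_above]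

theorem singleton_empty_join :
    join ({∅} : Finset (Finset α)) Y = relabel Function.Embedding.inr Y := by
  ext ρ
  rw [mem_join, mem_relabel, mem_singleton]
  constructor
  · rintro ⟨hleft, hright⟩
    exact ⟨_, hright, by rw [← empty_disjSum, ← hleft, toLeft_disjSum_toRight]⟩
  · rintro ⟨τ, hτ, rfl⟩
    rw [← empty_disjSum, toLeft_disjSum, toRight_disjSum]
    exact ⟨rfl, hτ⟩

theorem join_singleton_empty :
    join X ({∅} : Finset (Finset β)) = relabel Function.Embedding.inl X := by
  ext ρ
  rw [mem_join, mem_relabel, mem_singleton]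
  constructor
  · rintro ⟨hleft, hright⟩
    exact ⟨_, hleft, by rw [← disjSum_empty, ← hright, toLeft_disjSum_toRight]⟩
  · rintro ⟨σ, hσ, rfl⟩
    rw [← disjSum_empty, toLeft_disjSum, toRight_disjSum]
    exact ⟨hσ, rfl⟩

/-- The conclusions of the two merging recipes for `X` and `Y`: the join of two star decomposable
pairs is star decomposable, and a pair `(sd Y, Y₀)` with `χ̃(Y[Y₀]) = 0` can be merged with
`(sd X, ∅)` although the latter is no star decomposable pair. -/
structure MergeRules (X : Finset (Finset α)) (Y : Finset (Finset β)) : Prop where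
  merge {X₀ : Finset α} {Y₀ : Finset β} : StarDecV X X₀ → StarDecV Y Y₀ →
    StarDecV (join X Y) (X₀.disjSum Y₀)
  merge_empty {Y₀ : Finset β} : StarDecV X (verts X) → StarDecV Y Y₀ →
    redEuler (induced Y₀ Y) = 0 → StarDecV (join X Y) (disjSum ∅ Y₀)

theorem above_inr_nonempty {w : α} (hlast : above (r ∘ Sum.inl) (r (.inl x)) (verts X) = ∅)
    (hne : (above (r ∘ Sum.inr) (r (.inl x)) (verts Y)).Nonempty) (hw : w ∈ verts X)
    (ht : t ≤ r (.inl w)) : (above (r ∘ Sum.inr) t (verts Y)).Nonempty :=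
  hne.mono fun _ hv =>
    let ⟨hvY, hlt⟩ := mem_above.1 hv
    mem_above.2 ⟨hvY, (ht.trans (above_eq_empty.1 hlast w hw)).trans_lt hlt⟩

theorem IsStarDecOrder.starDecV_join_lk_left {w : α} (hX : IsStarDecOrder (r ∘ Sum.inl) X)
    (hY : IsStarDecOrder (r ∘ Sum.inr) Y) (hx : x ∈ verts X)
    (hlast : above (r ∘ Sum.inl) (r (.inl x)) (verts X) = ∅)
    (hne : (above (r ∘ Sum.inr) (r (.inl x)) (verts Y)).Nonempty)
    (hzero : redEuler (induced (above (r ∘ Sum.inr) (r (.inl x)) (verts Y)) Y) = 0)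
    (hw : w ∈ verts X) (rules : MergeRules (lk {w} X) Y) :
    StarDecV (join (lk {w} X) Y) (disjSum
      (above (r ∘ Sum.inl) (r (.inl w)) (verts (lk {w} X)))
      (above (r ∘ Sum.inr) (r (.inl w)) (verts Y))) := by
  have starDecV_Y : StarDecV Y (above (r ∘ Sum.inr) (r (.inl w)) (verts Y)) :=
    hY.starDecV isFinalSegment_above fun h =>
      absurd h (above_inr_nonempty hlast hne hw le_rfl).ne_empty
  obtain rfl | hwx := eq_or_ne w x
  · rw [above_eq_empty.2 fun v hv => above_eq_empty.1 hlast v (verts_lk_subset hv)]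
    exact rules.merge_empty (hX.last w hw hlast) starDecV_Y hzero
  · exact rules.merge (hX.link_of_ne_last hx hlast hw hwx) starDecV_Y

theorem IsStarDecOrder.starDecV_join_lk_right {w : β} (hX : IsStarDecOrder (r ∘ Sum.inl) X)
    (hY : IsStarDecOrder (r ∘ Sum.inr) Y) (hYc : IsCplx Y)
    (hr : Set.InjOn r ((verts X).disjSum (verts Y) : Set (α ⊕ β))) (hx : x ∈ verts X)
    (hzero : redEuler (induced (above (r ∘ Sum.inr) (r (.inl x)) (verts Y)) Y) = 0)
    (hw : w ∈ verts Y) (hne : (above (r ∘ Sum.inr) (r (.inr w)) (verts Y)).Nonempty)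
    (rules : MergeRules X (lk {w} Y)) :
    StarDecV (join X (lk {w} Y)) (disjSum
      (above (r ∘ Sum.inl) (r (.inr w)) (verts X))
      (above (r ∘ Sum.inr) (r (.inr w)) (verts (lk {w} Y)))) := by
  obtain hX₀ | hX₀ := (above (r ∘ Sum.inl) (r (.inr w)) (verts X)).eq_empty_or_nonempty
  · have hxw : r (.inl x) < r (.inr w) := by
      refine (above_eq_empty.1 hX₀ x hx).lt_of_ne fun h => ?_
      exact Sum.inl_ne_inr (hr (by simpa using hx) (by simpa using hw) h)
    rw [hX₀]
    exact rules.merge_empty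
      (hX.starDecV isFinalSegment_self fun h => absurd h (ne_empty_of_mem hx)) (hY.link w hw hne)
      (hY.redEuler_link_eq_zero hYc isFinalSegment_above hzero (mem_above.2 ⟨hw, hxw⟩) hne)
  · exact rules.merge (hX.starDecV isFinalSegment_above fun h => absurd h hX₀.ne_empty)
      (hY.link w hw hne)

theorem IsStarDecOrder.join (hX : IsStarDecOrder (r ∘ Sum.inl) X)
    (hY : IsStarDecOrder (r ∘ Sum.inr) Y) (hYc : IsCplx Y)
    (hr : Set.InjOn r ((verts X).disjSum (verts Y) : Set (α ⊕ β)))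
    (hx : x ∈ verts X) (hlast : above (r ∘ Sum.inl) (r (.inl x)) (verts X) = ∅)
    (hne : (above (r ∘ Sum.inr) (r (.inl x)) (verts Y)).Nonempty)
    (hzero : redEuler (induced (above (r ∘ Sum.inr) (r (.inl x)) (verts Y)) Y) = 0)
    (rules_left : ∀ w ∈ verts X, MergeRules (lk {w} X) Y)
    (rules_right : ∀ w ∈ verts Y, MergeRules X (lk {w} Y)) :
    IsStarDecOrder r (join X Y) := by
  obtain ⟨d, hd⟩ := hX.exists_pureDim
  obtain ⟨e, he⟩ := hY.exists_pureDim
  refine ⟨⟨_, hd.join he⟩, by rwa [verts_join hd.1 he.1], ?_, ?_⟩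
  all_goals
    simp only [verts_join hd.1 he.1, above_disjSum]
    rintro (w | w) hw habove
    all_goals
      simp only [inl_mem_disjSum, inr_mem_disjSum] at hw
  · rw [lk_inl_join, verts_join (hd.lk hw).1 he.1, above_disjSum]
    exact hX.starDecV_join_lk_left hY hx hlast hne hzero hw (rules_left w hw)
  · rw [lk_inr_join, verts_join hd.1 (he.lk hw).1, above_disjSum]
    refine hX.starDecV_join_lk_right hY hYc hr hx hzero hw ?_ (rules_right w hw)
    by_contra hY₀
    obtain ⟨v | v, hv⟩ := habove
    · obtain ⟨hvX, hlt⟩ := mem_above.1 (inl_mem_disjSum.1 hv)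
      exact hY₀ (above_inr_nonempty hlast hne hvX hlt.le)
    · exact hY₀ ⟨v, inr_mem_disjSum.1 hv⟩
  · exact absurd (disjSum_eq_empty.1 habove).2
      (above_inr_nonempty hlast hne hw le_rfl).ne_empty
  · rw [lk_inr_join, verts_join hd.1 (he.lk hw).1]
    exact (rules_right w hw).merge
      (hX.starDecV isFinalSegment_self fun h => absurd h (ne_empty_of_mem hx))
      (hY.last w hw (disjSum_eq_empty.1 habove).2)

end Joins

section Merging

variable {α β : Type*} [DecidableEq α] [DecidableEq β] {X : Finset (Finset α)}
  {Y : Finset (Finset β)} {rX : α → ℕ} {rY : β → ℕ} {X₀ : Finset α} {Y₀ Y₁ : Finset β} {x : α}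

/-- The total order on `V(X) ⊔ V(Y)` obtained by placing the blocks `V(Y) ∖ Y₀`, `V(X) ∖ X₀`,
`Y₀ ∖ Y₁`, `X₀`, `Y₁` one after the other, each ordered by `rX` or `rY`. -/
def mergedRank (rX : α → ℕ) (rY : β → ℕ) (X₀ : Finset α) (Y₀ Y₁ : Finset β) :
    α ⊕ β → ℕ ×ₗ ℕ
  | .inl x => toLex (if x ∈ X₀ then 3 else 1, rX x)
  | .inr y => toLex (if y ∈ Y₁ then 4 else if y ∈ Y₀ then 2 else 0, rY y)

theorem mergedRank_inl_lt_iff (hX₀ : IsFinalSegment rX (verts X) X₀) {v w : α}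
    (hv : v ∈ verts X) (hw : w ∈ verts X) :
    rX v < rX w ↔ mergedRank rX rY X₀ Y₀ Y₁ (.inl v) < mergedRank rX rY X₀ Y₀ Y₁ (.inl w) := by
  have hvw := fun h => hX₀.upper v h w hw
  have hwv := fun h => hX₀.upper w h v hv
  simp only [mergedRank, Prod.Lex.toLex_lt_toLex]
  grind

theorem mergedRank_inr_lt_iff (hY₀ : IsFinalSegment rY (verts Y) Y₀)
    (hY₁ : IsFinalSegment rY (verts Y) Y₁) {v w : β} (hv : v ∈ verts Y)
    (hw : w ∈ verts Y) :
    rY v < rY w ↔ mergedRank rX rY X₀ Y₀ Y₁ (.inr v) < mergedRank rX rY X₀ Y₀ Y₁ (.inr w) := by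
  have hvw₀ := fun h => hY₀.upper v h w hw
  have hwv₀ := fun h => hY₀.upper w h v hv
  have hvw₁ := fun h => hY₁.upper v h w hw
  have hwv₁ := fun h => hY₁.upper w h v hv
  simp only [mergedRank, Prod.Lex.toLex_lt_toLex]
  grind

theorem injOn_mergedRank {A : Finset α} {B : Finset β} (hX : Set.InjOn rX (A : Set α))
    (hY : Set.InjOn rY (B : Set β)) :
    Set.InjOn (mergedRank rX rY X₀ Y₀ Y₁) (A.disjSum B : Set (α ⊕ β)) := by
  rintro (v | v) hv (w | w) hw h
  all_goals
    simp only [mem_coe, inl_mem_disjSum, inr_mem_disjSum] at hv hw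
    simp only [mergedRank, toLex_inj, Prod.mk.injEq] at h
  · rw [hX hv hw h.2]
  · grind
  · grind
  · rw [hY hv hw h.2]

theorem isFinalSegment_mergedRank (hX₀ : IsFinalSegment rX (verts X) X₀)
    (hY₀ : IsFinalSegment rY (verts Y) Y₀) (hsub : Y₁ ⊆ Y₀) :
    IsFinalSegment (mergedRank rX rY X₀ Y₀ Y₁) ((verts X).disjSum (verts Y)) (X₀.disjSum Y₀) := by
  have mem_of_mem {v : β} (hv : v ∈ Y₁) : v ∈ Y₀ := hsub hv
  refine ⟨disjSum_mono hX₀.subset hY₀.subset, ?_⟩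
  rintro (a | a) ha (v | v) hv hle
  all_goals
    simp only [inl_mem_disjSum, inr_mem_disjSum] at ha hv ⊢
    simp only [mergedRank, Prod.Lex.toLex_le_toLex] at hle
  · have := hX₀.upper a ha v hv
    grind
  · grind
  · grind
  · have := hY₀.upper a ha v hv
    grind

theorem above_mergedRank_inl (hY₁ : Y₁ ⊆ verts Y) (hx : x ∈ X₀ ∨ Y₁ = Y₀) :
    above (mergedRank rX rY X₀ Y₀ Y₁ ∘ Sum.inr) (mergedRank rX rY X₀ Y₀ Y₁ (.inl x)) (verts Y) =
      Y₁ := by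
  ext v
  simp only [mem_above, Function.comp_apply, mergedRank, Prod.Lex.toLex_lt_toLex]
  grind

theorem IsStarDecOrder.starDecV_join (hX : IsStarDecOrder rX X) (hY : IsStarDecOrder rY Y)
    (hYc : IsCplx Y) (hverts : (verts X).Nonempty) (hX₀ : IsFinalSegment rX (verts X) X₀)
    (hY₀ : IsFinalSegment rY (verts Y) Y₀) (hY₁ : IsFinalSegment rY (verts Y) Y₁) (hsub : Y₁ ⊆ Y₀)
    (hne : Y₁.Nonempty) (hzero : redEuler (induced Y₁ Y) = 0) (hcut : X₀.Nonempty ∨ Y₁ = Y₀)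
    (rules_left : ∀ w ∈ verts X, MergeRules (lk {w} X) Y)
    (rules_right : ∀ w ∈ verts Y, MergeRules X (lk {w} Y)) :
    StarDecV (Paper.join X Y) (X₀.disjSum Y₀) := by
  obtain ⟨x, hx, hlast⟩ := (isFinalSegment_self (r := rX)).exists_last hverts
  have hxX₀ : x ∈ X₀ ∨ Y₁ = Y₀ := hcut.imp_left fun ⟨v, hv⟩ =>
    hX₀.upper v hv x hx (above_eq_empty.1 hlast v (hX₀.subset hv))
  have habove : above (mergedRank rX rY X₀ Y₀ Y₁ ∘ Sum.inr) _ (verts Y) = Y₁ :=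
    above_mergedRank_inl (rX := rX) hY₁.subset hxX₀
  have hjoin : IsStarDecOrder (mergedRank rX rY X₀ Y₀ Y₁) (Paper.join X Y) :=
    (hX.congr fun v hv w hw => mergedRank_inl_lt_iff hX₀ hv hw).join
      (hY.congr fun v hv w hw => mergedRank_inr_lt_iff hY₀ hY₁ hv hw) hYc
      (injOn_mergedRank hX.injOn hY.injOn) hx
      (above_eq_empty.2 fun v hv => not_lt.1 <| (mergedRank_inl_lt_iff hX₀ hx hv).not.1 <|
        (above_eq_empty.1 hlast v hv).not_gt)
      (by rwa [habove]) (by rwa [habove]) rules_left rules_right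
  refine hjoin.starDecV ?_ fun h => ?_
  · rw [verts_join hX.exists_pureDim.choose_spec.1 hY.exists_pureDim.choose_spec.1]
    exact isFinalSegment_mergedRank hX₀ hY₀ hsub
  · exact absurd (disjSum_eq_empty.1 h).2 (hne.mono hsub).ne_empty

theorem StarDecV.singleton_empty_join (h : StarDecV Y Y₀) :
    StarDecV (join ({∅} : Finset (Finset α)) Y) (disjSum ∅ Y₀) := by
  rw [Paper.singleton_empty_join, empty_disjSum]
  exact h.relabel _

theorem StarDecV.join_singleton_empty (h : StarDecV X X₀) :
    StarDecV (join X ({∅} : Finset (Finset β))) (X₀.disjSum ∅) := by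
  rw [Paper.join_singleton_empty, disjSum_empty]
  exact h.relabel _

theorem mergeRules (hY : IsCplx Y) : MergeRules X Y := by
  induction hn : #(verts X) + #(verts Y) using Nat.strong_induction_on generalizing X Y with
  | h n ih =>
    have rules_left (w : α) (hw : w ∈ verts X) : MergeRules (lk {w} X) Y :=
      have := card_lt_card (verts_lk_ssubset hw)
      ih _ (by omega) hY rfl
    have rules_right (w : β) (hw : w ∈ verts Y) : MergeRules X (lk {w} Y) :=
      have := card_lt_card (verts_lk_ssubset hw)
      ih _ (by omega) hY.lk rfl
    refine ⟨fun {X₀ Y₀} hX₀ hY₀ => ?_, fun {Y₀} hX' hY₀ hzero => ?_⟩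
    · obtain hX | hX := (verts X).eq_empty_or_nonempty
      · obtain ⟨rfl, rfl⟩ := hX₀.eq_empty_of_verts_eq_empty hX
        exact hY₀.singleton_empty_join
      obtain hY' | hY' := (verts Y).eq_empty_or_nonempty
      · obtain ⟨rfl, rfl⟩ := hY₀.eq_empty_of_verts_eq_empty hY'
        exact hX₀.join_singleton_empty
      have hX₀ne := hX₀.nonempty hX
      have hY₀ne := hY₀.nonempty hY'
      obtain ⟨rX, hrX, hX₀, -⟩ := hX₀.exists_order
      obtain ⟨rY, hrY, hY₀, -⟩ := hY₀.exists_order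
      obtain ⟨y, hy, hlast⟩ := hY₀.exists_last hY₀ne
      have hyY := hY₀.subset hy
      exact hrX.starDecV_join hrY hY hX hX₀ hY₀ (hrY.isFinalSegment_singleton hyY hlast)
        (singleton_subset_iff.2 hy) (singleton_nonempty y) (redEuler_induced_singleton hY hyY)
        (.inl hX₀ne) rules_left rules_right
    · obtain hX | hX := (verts X).eq_empty_or_nonempty
      · obtain ⟨rfl, -⟩ := hX'.eq_empty_of_verts_eq_empty hX
        exact hY₀.singleton_empty_join
      obtain ⟨rX, hrX, -⟩ := hX'.exists_order
      obtain ⟨rY, hrY, hY₀, -⟩ := hY₀.exists_order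
      exact hrX.starDecV_join hrY hY hX isFinalSegment_empty hY₀ hY₀ Subset.rfl
        (nonempty_of_redEuler_induced_eq_zero hzero) hzero (.inr rfl) rules_left rules_right

omit [DecidableEq α] [DecidableEq β] in
theorem pairwise_filterMap_getLeft? {L : List (α ⊕ β)} {r : α ⊕ β → ℕ}
    (hL : L.Pairwise fun v w => r v < r w) :
    (L.filterMap Sum.getLeft?).Pairwise fun v w => (r ∘ Sum.inl) v < (r ∘ Sum.inl) w := by
  refine List.pairwise_filterMap.2 (hL.imp fun h v hv w hw => ?_)
  rwa [Sum.getLeft?_eq_some_iff.1 hv, Sum.getLeft?_eq_some_iff.1 hw] at h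

omit [DecidableEq α] [DecidableEq β] in
theorem pairwise_filterMap_getRight? {L : List (α ⊕ β)} {r : α ⊕ β → ℕ}
    (hL : L.Pairwise fun v w => r v < r w) :
    (L.filterMap Sum.getRight?).Pairwise fun v w => (r ∘ Sum.inr) v < (r ∘ Sum.inr) w := by
  refine List.pairwise_filterMap.2 (hL.imp fun h v hv w hw => ?_)
  rwa [Sum.getRight?_eq_some_iff.1 hv, Sum.getRight?_eq_some_iff.1 hw] at h

theorem join_starDecV_nice_general {d e : ℤ} (hX : PureDim X d) (hY : PureDim Y e) (hYc : IsCplx Y)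
    (hzero : redEuler (induced Y₀ Y) = 0) {L : List (α ⊕ β)} (hnd : L.Nodup)
    (hcov : L.toFinset = (verts X).image Sum.inl ∪ (verts Y).image Sum.inr)
    (hresX : InducesStarDecompV (L.filterMap Sum.getLeft?) X (verts X))
    (hresY : InducesStarDecompV (L.filterMap Sum.getRight?) Y Y₀)
    (hafter : ∃ (i : ℕ) (hi : i < L.length), L[i].isLeft ∧
      (L.drop (i + 1)).toFinset = Y₀.image Sum.inr) :
    InducesStarDecompV L (join X Y) (Y₀.image Sum.inr) := by
  obtain ⟨i, hi, hleft, hdrop⟩ := hafter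
  obtain ⟨x, hx⟩ := Sum.isLeft_iff.1 hleft
  obtain ⟨r, hL⟩ := exists_rank hnd
  rw [image_inl_union_image_inr] at hcov
  have hxX : x ∈ verts X := by
    rw [← inl_mem_disjSum (t := verts Y), ← hcov, ← hx]
    simp
  have habove : above r (r (.inl x)) ((verts X).disjSum (verts Y)) = Y₀.image Sum.inr := by
    rw [← hcov, ← hdrop, ← hx, above_toFinset hL hi]
  obtain ⟨hlast, hY₀⟩ : above (r ∘ Sum.inl) (r (.inl x)) (verts X) = ∅ ∧
      above (r ∘ Sum.inr) (r (.inl x)) (verts Y) = Y₀ := by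
    rw [above_disjSum] at habove
    have himage := image_inl_union_image_inr (∅ : Finset α) Y₀
    rw [image_empty, empty_union] at himage
    exact disjSum_inj.1 (habove.trans himage)
  have hne := nonempty_of_redEuler_induced_eq_zero hzero
  have hjoin : IsStarDecOrder r (join X Y) :=
    (hresX.isStarDecOrder (pairwise_filterMap_getLeft? hL) ⟨d, hX⟩).join
      (hresY.isStarDecOrder (pairwise_filterMap_getRight? hL) ⟨e, hY⟩) hYc
      (by simpa [← hcov] using injOn_rank hL) hxX hlast (hY₀ ▸ hne) (hY₀ ▸ hzero)
      (fun _ _ => mergeRules hYc) (fun _ _ => mergeRules hYc.lk)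
  have hverts := verts_join hX.1 hY.1
  refine hjoin.inducesStarDecompV hL (hcov.trans hverts.symm) ?_ (hne.image _)
  rw [← habove, hverts]
  exact isFinalSegment_above

end Merging

/-- A specialized merging recipe: with `dim X, dim Y ≥ 0`, `sd X` star
decomposable in vertices, `(sd Y, Y₀)` star decomposable in vertices with
`st(Y₀, sd Y)` having trivial reduced homology, and `≺` (encoded by `L`) restricting to
the given star decompositions in vertices and satisfying
`Y₀ = (V(X) ⊔ V(Y))_{≻x̂}` for `x̂` the `≺`-largest element of `V(X)`, the order `≺`
induces a star decomposition of `(sd (X * Y), Y₀)` in vertices. -/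
theorem join_starDecV_nice {α β : Type*} [DecidableEq α] [DecidableEq β]
    (X : Finset (Finset α)) (Y : Finset (Finset β)) (hX : IsCplx X) (hY : IsCplx Y)
    (dX dY : ℤ) (hdX : 0 ≤ dX) (hdY : 0 ≤ dY) (hpX : PureDim X dX) (hpY : PureDim Y dY)
    (Y₀ : Finset β) (hY₀sub : Y₀ ⊆ verts Y) (hY₀ne : Y₀.Nonempty)
    (hsdX : StarDecV X (verts X)) (hsdY : StarDecV Y Y₀)
    (hhom : TrivialRedHomology (starSet (Y₀.image fun v => ({v} : Finset β)) (sd Y)))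
    (L : List (α ⊕ β)) (hnd : L.Nodup)
    (hcov : L.toFinset = (verts X).image Sum.inl ∪ (verts Y).image Sum.inr)
    (hresX : InducesStarDecompV (L.filterMap fun z => z.getLeft?) X (verts X))
    (hresY : InducesStarDecompV (L.filterMap fun z => z.getRight?) Y Y₀)
    (hafter : ∃ i, ∃ hi : i < L.length, (L.get ⟨i, hi⟩).isLeft ∧
      (∀ j, (hj : j < L.length) → i < j → (L.get ⟨j, hj⟩).isRight) ∧
      (L.drop (i + 1)).toFinset = Y₀.image Sum.inr) :
    InducesStarDecompV L (join X Y) (Y₀.image Sum.inr) := by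
  refine join_starDecV_nice_general hpX hpY hY
    (redEuler_induced_eq_zero_of_trivialRedHomology hY hY₀sub hY₀ne hhom) hnd hcov hresX hresY ?_
  obtain ⟨i, hi, hleft, -, hdrop⟩ := hafter
  exact ⟨i, hi, hleft, hdrop⟩

end Paper
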